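/- Let |ψ⟩ be a unit vector in H = H_1 ⊗ … ⊗ H_n and N = {N_j} a neighborhood structure. Then the pure state ρ = |ψ⟩⟨ψ| is DQLS relative to N if and only if it is FFQLS relative to N. -/

import Mathlib

namespace QDS

open Matrix
open scoped ComplexOrder

/-! ### Basic single-system notions -/

section Single

variable {ι : Type*} [Fintype ι] [DecidableEq ι]

open Classical in
/-- The (unique) positive-semidefinite square root of a positive-semidefinite matrix
(junk value `0` if no positive-semidefinite square root exists). -/
noncomputable def msqrt (A : Matrix ι ι ℂ) : Matrix ι ι ℂ :=
  if h : ∃ B : Matrix ι ι ℂ, B.PosSemidef ∧ B * B = A then h.choose else 0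

open Classical in
/-- The Moore–Penrose pseudoinverse of a matrix, defined via its characterizing
properties (it always exists and is unique for complex matrices). -/
noncomputable def mpinv (A : Matrix ι ι ℂ) : Matrix ι ι ℂ :=
  if h : ∃ B : Matrix ι ι ℂ,
      A * B * A = A ∧ B * A * B = B ∧ (A * B)ᴴ = A * B ∧ (B * A)ᴴ = B * A
  then h.choose else 0

/-- A density operator: positive semidefinite with unit trace. -/
def IsDensity (ρ : Matrix ι ι ℂ) : Prop := ρ.PosSemidef ∧ ρ.trace = 1

/-- A CPTP map in Kraus (operator-sum) form. -/
def IsCPTP (T : Matrix ι ι ℂ →ₗ[ℂ] Matrix ι ι ℂ) : Prop :=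
  ∃ (m : ℕ) (M : Fin m → Matrix ι ι ℂ),
    (∀ X, T X = ∑ k, M k * X * (M k)ᴴ) ∧ (∑ k, (M k)ᴴ * M k) = 1

/-- The Lindblad (QDS) generator with Hamiltonian `Hm` and noise operators `Lk`:
`L(X) = -i[Hm, X] + Σₖ (Lₖ X Lₖ† - ½{Lₖ†Lₖ, X})`. -/
noncomputable def lindbladMap (Hm : Matrix ι ι ℂ) {m : ℕ} (Lk : Fin m → Matrix ι ι ℂ) :
    Matrix ι ι ℂ →ₗ[ℂ] Matrix ι ι ℂ :=
  (-Complex.I) • (LinearMap.mulLeft ℂ Hm - LinearMap.mulRight ℂ Hm) +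
    ∑ k, ((LinearMap.mulRight ℂ (Lk k)ᴴ).comp (LinearMap.mulLeft ℂ (Lk k)) -
      ((1 : ℂ)/2) • (LinearMap.mulLeft ℂ ((Lk k)ᴴ * Lk k) +
        LinearMap.mulRight ℂ ((Lk k)ᴴ * Lk k)))

/-- `L` is a QDS (Lindblad) generator. -/
def IsLindblad (L : Matrix ι ι ℂ →ₗ[ℂ] Matrix ι ι ℂ) : Prop :=
  ∃ Hm : Matrix ι ι ℂ, Hm.IsHermitian ∧
    ∃ (m : ℕ) (Lk : Fin m → Matrix ι ι ℂ), L = lindbladMap Hm Lk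

/-- `Ld` is the Hilbert–Schmidt adjoint of `L` (w.r.t. `⟨X,Y⟩ = Tr(X†Y)`). -/
def IsHSAdjoint (L Ld : Matrix ι ι ℂ →ₗ[ℂ] Matrix ι ι ℂ) : Prop :=
  ∀ X Y : Matrix ι ι ℂ, ((Ld X)ᴴ * Y).trace = (Xᴴ * L Y).trace

/-- The fixed-point set of a (super)operator. -/
def fixSet (T : Matrix ι ι ℂ →ₗ[ℂ] Matrix ι ι ℂ) : Set (Matrix ι ι ℂ) := {X | T X = X}

/-- The support of an operator: the orthogonal complement of its kernel,
equivalently the range of its adjoint. -/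
noncomputable def msupp (A : Matrix ι ι ℂ) : Submodule ℂ (ι → ℂ) := LinearMap.range (Aᴴ).mulVecLin

/-- The support of a set of operators: the span of the union of their supports. -/
noncomputable def suppSet (W : Set (Matrix ι ι ℂ)) : Submodule ℂ (ι → ℂ) := ⨆ O ∈ W, msupp O

/-- The minimal modular-invariant distorted algebra generated by `W` relative to `ρ`:
the smallest subspace containing `W` that is closed under the adjoint, under the
`ρ`-modified product `(X,Y) ↦ X ρ⁻ Y`, and under the modular map `X ↦ ρ^{1/2} X ρ⁻^{1/2}`. -/
noncomputable def Fdist (ρ : Matrix ι ι ℂ) (W : Set (Matrix ι ι ℂ)) :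
    Submodule ℂ (Matrix ι ι ℂ) :=
  sInf {S : Submodule ℂ (Matrix ι ι ℂ) | W ⊆ S ∧ (∀ X ∈ S, Xᴴ ∈ S) ∧
    (∀ X ∈ S, ∀ Y ∈ S, X * mpinv ρ * Y ∈ S) ∧
    (∀ X ∈ S, msqrt ρ * X * mpinv (msqrt ρ) ∈ S)}

/-- `ρ` is globally asymptotically stable for the generator `L`: it is invariant and every
solution of `ẋ = L(x)` starting at a density operator converges to `ρ` as `t → ∞`. -/
def IsGAS (L : Matrix ι ι ℂ →ₗ[ℂ] Matrix ι ι ℂ) (ρ : Matrix ι ι ℂ) : Prop :=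
  L ρ = 0 ∧
  ∀ σ : Matrix ι ι ℂ, IsDensity σ →
    ∀ x : ℝ → Matrix ι ι ℂ, x 0 = σ →
      (∀ t : ℝ, ∀ i j, HasDerivAt (fun s : ℝ => x s i j) (L (x t) i j) t) →
      ∀ i j, Filter.Tendsto (fun t : ℝ => x t i j) Filter.atTop (nhds (ρ i j))

end Single

/-! ### Bipartite notions -/

section Bipartite

variable {α β : Type*} [Fintype α] [Fintype β] [DecidableEq α] [DecidableEq β]

/-- Partial trace over the second factor. -/
noncomputable def ptraceB (ρ : Matrix (α × β) (α × β) ℂ) : Matrix α α ℂ :=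
  Matrix.of fun i j => ∑ k : β, ρ (i, k) (j, k)

/-- The operator Schmidt span of `ρ` on the first factor:
`{Tr_B[(I ⊗ B) ρ] : B ∈ B(H_B)}`. -/
noncomputable def opSchmidtA (ρ : Matrix (α × β) (α × β) ℂ) : Set (Matrix α α ℂ) :=
  {A | ∃ B : Matrix β β ℂ,
    A = ptraceB ((Matrix.kroneckerMap (· * ·) (1 : Matrix α α ℂ) B) * ρ)}

/-- The (vector) Schmidt span of `v ∈ V_A ⊗ V_B` relative to `V_A`: the image of `v`
under partial inner products with vectors of `V_B`. -/
def vSchmidtA (v : α × β → ℂ) : Set (α → ℂ) :=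
  {w | ∃ b : β → ℂ, w = fun a => ∑ j, (starRingEnd ℂ) (b j) * v (a, j)}

/-- `Σ_A(v) ⊗ V_B` as a subspace of `V_A ⊗ V_B`. -/
noncomputable def extVSchmidtA (v : α × β → ℂ) : Submodule ℂ (α × β → ℂ) :=
  Submodule.span ℂ {v' | ∃ w ∈ vSchmidtA v, ∃ b : β → ℂ, v' = fun p => w p.1 * b p.2}

end Bipartite

/-! ### Multipartite notions -/

section Multipartite

variable {n : ℕ} {d : Fin n → Type*} [∀ a, Fintype (d a)] [∀ a, DecidableEq (d a)]

/-- Index type of the neighborhood factor `H_N`. -/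
abbrev nbhdIdx (d : Fin n → Type*) (N : Finset (Fin n)) : Type _ :=
  ∀ a : {x : Fin n // x ∈ N}, d a

/-- Index type of the complementary factor `H_N̄`. -/
abbrev nbhdCoIdx (d : Fin n → Type*) (N : Finset (Fin n)) : Type _ :=
  ∀ a : {x : Fin n // ¬ x ∈ N}, d a

/-- The factorization `H ≃ H_N ⊗ H_N̄` at the level of index types. -/
def splitEquiv (d : Fin n → Type*) (N : Finset (Fin n)) :
    (∀ a, d a) ≃ nbhdIdx d N × nbhdCoIdx d N :=
  Equiv.piEquivPiSubtypeProd (fun x => x ∈ N) d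

variable (d)

/-- The operator `A ⊗ B` on `H = H_N ⊗ H_N̄`, viewed as an operator on `H`. -/
noncomputable def splitLift (N : Finset (Fin n))
    (A : Matrix (nbhdIdx d N) (nbhdIdx d N) ℂ)
    (B : Matrix (nbhdCoIdx d N) (nbhdCoIdx d N) ℂ) :
    Matrix (∀ a, d a) (∀ a, d a) ℂ :=
  (Matrix.kroneckerMap (· * ·) A B).submatrix (splitEquiv d N) (splitEquiv d N)

/-- The neighborhood operator `A ⊗ I_N̄` on `H`. -/
noncomputable def nbhdLift (N : Finset (Fin n))
    (A : Matrix (nbhdIdx d N) (nbhdIdx d N) ℂ) : Matrix (∀ a, d a) (∀ a, d a) ℂ :=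
  splitLift d N A 1

/-- The operator `I_N ⊗ B` on `H`. -/
noncomputable def coLift (N : Finset (Fin n))
    (B : Matrix (nbhdCoIdx d N) (nbhdCoIdx d N) ℂ) : Matrix (∀ a, d a) (∀ a, d a) ℂ :=
  splitLift d N 1 B

/-- The reduced state `ρ_N = Tr_N̄(ρ)` on the neighborhood `N`. -/
noncomputable def nbhdPtrace (N : Finset (Fin n)) (ρ : Matrix (∀ a, d a) (∀ a, d a) ℂ) :
    Matrix (nbhdIdx d N) (nbhdIdx d N) ℂ :=
  Matrix.of fun i j => ∑ k : nbhdCoIdx d N,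
    ρ ((splitEquiv d N).symm (i, k)) ((splitEquiv d N).symm (j, k))

/-- The operator Schmidt span of `ρ` on the neighborhood `N`:
`Σ_N(ρ) = {Tr_N̄[(I_N ⊗ B) ρ] : B}`. -/
noncomputable def nbhdSchmidt (N : Finset (Fin n)) (ρ : Matrix (∀ a, d a) (∀ a, d a) ℂ) :
    Set (Matrix (nbhdIdx d N) (nbhdIdx d N) ℂ) :=
  {A | ∃ B : Matrix (nbhdCoIdx d N) (nbhdCoIdx d N) ℂ,
    A = nbhdPtrace d N (coLift d N B * ρ)}

/-- The extended minimal modular-invariant distorted algebra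
`F_{ρ_N}(Σ_N(ρ)) ⊗ B(H_N̄)` as a subspace of `B(H)`. -/
noncomputable def extF (N : Finset (Fin n)) (ρ : Matrix (∀ a, d a) (∀ a, d a) ℂ) :
    Submodule ℂ (Matrix (∀ a, d a) (∀ a, d a) ℂ) :=
  Submodule.span ℂ {X | ∃ A ∈ Fdist (nbhdPtrace d N ρ) (nbhdSchmidt d N ρ),
    ∃ B : Matrix (nbhdCoIdx d N) (nbhdCoIdx d N) ℂ, X = splitLift d N A B}

/-- A neighborhood QDS generator for `N`: a Lindblad generator whose Hamiltonian and
noise operators all act as `X_N ⊗ I_N̄`. -/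
def IsNbhdGen (N : Finset (Fin n))
    (L : Matrix (∀ a, d a) (∀ a, d a) ℂ →ₗ[ℂ] Matrix (∀ a, d a) (∀ a, d a) ℂ) : Prop :=
  ∃ HN : Matrix (nbhdIdx d N) (nbhdIdx d N) ℂ, HN.IsHermitian ∧
    ∃ (m : ℕ) (Lk : Fin m → Matrix (nbhdIdx d N) (nbhdIdx d N) ℂ),
      L = lindbladMap (nbhdLift d N HN) fun k => nbhdLift d N (Lk k)

/-- A purely dissipative neighborhood generator for `N` (zero Hamiltonian in some
Lindblad representation). -/
def IsDissipNbhdGen (N : Finset (Fin n))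
    (L : Matrix (∀ a, d a) (∀ a, d a) ℂ →ₗ[ℂ] Matrix (∀ a, d a) (∀ a, d a) ℂ) : Prop :=
  ∃ (m : ℕ) (Lk : Fin m → Matrix (nbhdIdx d N) (nbhdIdx d N) ℂ),
    L = lindbladMap 0 fun k => nbhdLift d N (Lk k)

/-- The family of neighborhood generators `Lj` is frustration free: every invariant
state of the sum is invariant for each component. -/
def IsFFFamily {M : ℕ}
    (Lj : Fin M → (Matrix (∀ a, d a) (∀ a, d a) ℂ →ₗ[ℂ] Matrix (∀ a, d a) (∀ a, d a) ℂ)) :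
    Prop :=
  ∀ ρ : Matrix (∀ a, d a) (∀ a, d a) ℂ, IsDensity ρ → (∑ j, Lj j) ρ = 0 → ∀ j, Lj j ρ = 0

/-- `ρ` is frustration-free quasi-locally stabilizable relative to the neighborhood
structure `Nb`. -/
def IsFFQLS {M : ℕ} (Nb : Fin M → Finset (Fin n))
    (ρ : Matrix (∀ a, d a) (∀ a, d a) ℂ) : Prop :=
  ∃ Lj : Fin M → (Matrix (∀ a, d a) (∀ a, d a) ℂ →ₗ[ℂ] Matrix (∀ a, d a) (∀ a, d a) ℂ),
    (∀ j, IsNbhdGen d (Nb j) (Lj j)) ∧ IsFFFamily d Lj ∧ IsGAS (∑ j, Lj j) ρ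

/-- A pure state `|ψ⟩⟨ψ|` is dissipatively quasi-locally stabilizable relative to `Nb`:
it is GAS for a QL generator whose components have zero Hamiltonian and neighborhood
noise operators annihilating `ψ`. -/
def IsDQLS {M : ℕ} (Nb : Fin M → Finset (Fin n)) (ψ : (∀ a, d a) → ℂ) : Prop :=
  ∃ Lj : Fin M → (Matrix (∀ a, d a) (∀ a, d a) ℂ →ₗ[ℂ] Matrix (∀ a, d a) (∀ a, d a) ℂ),
    (∀ j, ∃ (m : ℕ) (Dk : Fin m → Matrix (nbhdIdx d (Nb j)) (nbhdIdx d (Nb j)) ℂ),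
      Lj j = lindbladMap 0 (fun k => nbhdLift d (Nb j) (Dk k)) ∧
      ∀ k, (nbhdLift d (Nb j) (Dk k)).mulVec ψ = 0) ∧
    IsGAS (∑ j, Lj j) (Matrix.vecMulVec ψ (star ψ))

/-- The (vector) Schmidt span of `ψ` relative to the neighborhood factor `H_N`. -/
def vecSchmidt (N : Finset (Fin n)) (ψ : (∀ a, d a) → ℂ) : Set (nbhdIdx d N → ℂ) :=
  {w | ∃ b : nbhdCoIdx d N → ℂ,
    w = fun i => ∑ k, (starRingEnd ℂ) (b k) * ψ ((splitEquiv d N).symm (i, k))}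

/-- `Σ_N(ψ) ⊗ H_N̄` as a subspace of `H`. -/
noncomputable def extVecSchmidt (N : Finset (Fin n)) (ψ : (∀ a, d a) → ℂ) :
    Submodule ℂ ((∀ a, d a) → ℂ) :=
  Submodule.span ℂ {v | ∃ w ∈ vecSchmidt d N ψ, ∃ b : nbhdCoIdx d N → ℂ,
    v = fun x => w ((splitEquiv d N) x).1 * b ((splitEquiv d N) x).2}

end Multipartite

/-!
A purely dissipative generator whose noise operators annihilate `ψ` kills `|ψ⟩⟨ψ|`, and a globally
asymptotically stable state is the only invariant state; so a DQLS generator is frustration free.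

Conversely, write a Lindblad generator as `X ↦ ∑ₖ Lₖ X Lₖ† + G X + X G†` with
`G = -iH - ½ ∑ₖ Lₖ†Lₖ`. If it kills `|ψ⟩⟨ψ|`, then `ψ` is a common eigenvector of `G` and all `Lₖ`,
so `G - g` and `Lₖ - lₖ`, with `g` and `lₖ` the eigenvalues, annihilate `ψ`; they are again
neighborhood operators. Taking them as noise operators preserves global asymptotic stability,
because an invariant pure state is globally asymptotically stable if and only if no nonzero
subspace orthogonal to `ψ` is invariant under the noise operators and the drift `G`.

To see that such a pure state is attractive, evolve its projector in the Heisenberg picture. The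
evolved projector increases with time, so its kernel at a time `t > 0` is contained in the earlier
kernels, hence is invariant under the noise operators and the drift, hence is zero. The projector
evolved for unit time therefore dominates a positive multiple of the identity, and the overlap of
any state with `ψ` increases to `1`.
-/

section LinearFlow

open Filter Topology

variable {E F V : Type*} [NormedAddCommGroup E] [NormedSpace ℝ E] [FiniteDimensional ℝ E]
  [NormedAddCommGroup F] [NormedSpace ℝ F] [FiniteDimensional ℝ F]
  [NormedAddCommGroup V] [NormedSpace ℝ V]

/-- The flow `exp (t f)` of the linear differential equation `ẋ = f x` on a finite-dimensional
space. -/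
noncomputable def linearFlow (f : E →ₗ[ℝ] E) (t : ℝ) : E →L[ℝ] E :=
  NormedSpace.exp (t • LinearMap.toContinuousLinearMap f)

lemma linearFlow_zero (f : E →ₗ[ℝ] E) : linearFlow f 0 = 1 := by
  rw [linearFlow, zero_smul, NormedSpace.exp_zero]

lemma linearFlow_add (f : E →ₗ[ℝ] E) (s t : ℝ) :
    linearFlow f (s + t) = linearFlow f s * linearFlow f t := by
  have := FiniteDimensional.complete ℝ E
  let _ : NormedAlgebra ℚ (E →L[ℝ] E) := .restrictScalars ℚ ℝ _
  rw [linearFlow, add_smul]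
  exact NormedSpace.exp_add_of_commute ((Commute.refl _).smul_left _ |>.smul_right _)

lemma hasDerivAt_linearFlow (f : E →ₗ[ℝ] E) (x : E) (t : ℝ) :
    HasDerivAt (fun s => linearFlow f s x) (f (linearFlow f t x)) t := by
  have := FiniteDimensional.complete ℝ E
  exact (ContinuousLinearMap.apply ℝ E x).hasFDerivAt.comp_hasDerivAt t
    (hasDerivAt_exp_smul_const' (LinearMap.toContinuousLinearMap f) t)

lemma eq_linearFlow_of_hasDerivAt {f : E →ₗ[ℝ] E} {x : ℝ → E}
    (hx : ∀ t, HasDerivAt x (f (x t)) t) (t : ℝ) : x t = linearFlow f t (x 0) := by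
  have := FiniteDimensional.complete ℝ E
  have h_lip : LipschitzWith ‖LinearMap.toContinuousLinearMap f‖₊ f :=
    (LinearMap.toContinuousLinearMap f).lipschitz
  refine congrFun (ODE_solution_unique_univ (v := fun _ => f) (s := fun _ => Set.univ) (t₀ := 0)
    (fun _ => h_lip.lipschitzOnWith) (fun s => ⟨hx s, trivial⟩)
    (fun s => ⟨hasDerivAt_linearFlow f (x 0) s, trivial⟩) ?_) t
  rw [linearFlow_zero, one_apply_eq_self]

lemma linearFlow_apply_of_apply_eq_zero {f : E →ₗ[ℝ] E} {x : E} (hx : f x = 0) (t : ℝ) :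
    linearFlow f t x = x :=
  (eq_linearFlow_of_hasDerivAt (fun s => hx.symm ▸ hasDerivAt_const s x) t).symm

lemma hasSum_linearFlow (f : E →ₗ[ℝ] E) (t : ℝ) (x : E) :
    HasSum (fun n : ℕ => (n.factorial : ℝ)⁻¹ • t ^ n • f^[n] x) (linearFlow f t x) := by
  have := FiniteDimensional.complete ℝ E
  have h_sum := (NormedSpace.exp_series_hasSum_exp' (𝕂 := ℝ)
    (t • LinearMap.toContinuousLinearMap f)).mapL (ContinuousLinearMap.apply ℝ E x)
  refine h_sum.congr_fun fun n => ?_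
  simp [smul_pow]

lemma linearFlow_adjoint (B : E →ₗ[ℝ] F →ₗ[ℝ] V) {f : E →ₗ[ℝ] E} {g : F →ₗ[ℝ] F}
    (hB : ∀ x y, B (f x) y = B x (g y)) (t : ℝ) (x : E) (y : F) :
    B (linearFlow f t x) y = B x (linearFlow g t y) := by
  have h_iterate (n : ℕ) : ∀ x y, B (f^[n] x) y = B x (g^[n] y) := by
    induction n with
    | zero => exact fun _ _ => rfl
    | succ n ih =>
      intro x y
      rw [Function.iterate_succ_apply, Function.iterate_succ_apply', ih, hB]
  have h_left := (hasSum_linearFlow f t x).mapL (LinearMap.toContinuousLinearMap (B.flip y))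
  have h_right := (hasSum_linearFlow g t y).mapL (LinearMap.toContinuousLinearMap (B x))
  refine h_left.unique (h_right.congr_fun fun n => ?_)
  simp [h_iterate]

lemma linearFlow_add_smul_id (f : E →ₗ[ℝ] E) (c t : ℝ) (x : E) :
    linearFlow (f + c • LinearMap.id) t x = Real.exp (c * t) • linearFlow f t x := by
  have h_deriv (s : ℝ) : HasDerivAt (fun s => Real.exp (c * s) • linearFlow f s x)
      ((f + c • LinearMap.id : E →ₗ[ℝ] E) (Real.exp (c * s) • linearFlow f s x)) s := by
    refine (((hasDerivAt_id s).const_mul c).exp.smul (hasDerivAt_linearFlow f x s)).congr_deriv ?_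
    simp [smul_smul, mul_comm]
  simpa [linearFlow_zero] using (eq_linearFlow_of_hasDerivAt h_deriv t).symm

lemma tendsto_linearFlow_add_inv_smul (f g : E →ₗ[ℝ] E) (t : ℝ) (x : E) :
    Tendsto (fun c : ℝ => linearFlow (f + c⁻¹ • g) t x) atTop (𝓝 (linearFlow f t x)) := by
  have := FiniteDimensional.complete ℝ E
  have h_gen : Tendsto (fun c : ℝ => t • (LinearMap.toContinuousLinearMap f +
      c⁻¹ • LinearMap.toContinuousLinearMap g)) atTop
      (𝓝 (t • LinearMap.toContinuousLinearMap f)) := by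
    simpa using (tendsto_const_nhds.add ((tendsto_inv_atTop_zero (𝕜 := ℝ)).smul_const
      (LinearMap.toContinuousLinearMap g))).const_smul t
  let _ : NormedAlgebra ℚ (E →L[ℝ] E) := .restrictScalars ℚ ℝ _
  have h_exp := (NormedSpace.exp_continuous.tendsto _).comp h_gen
  refine (((ContinuousLinearMap.apply ℝ E x).continuous.tendsto _).comp h_exp).congr fun c => ?_
  simp [linearFlow]

lemma linearFlow_mem_of_mapsTo {K : PointedCone ℝ E} (hK : IsClosed (K : Set E))
    {f : E →ₗ[ℝ] E} (hf : Set.MapsTo f K K) {t : ℝ} (ht : 0 ≤ t) {x : E} (hx : x ∈ K) :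
    linearFlow f t x ∈ K :=
  hK.mem_of_tendsto (hasSum_linearFlow f t x) <| .of_forall fun _ =>
    K.sum_mem fun n _ => K.smul_mem (by positivity) <|
      K.smul_mem (pow_nonneg ht n) (hf.iterate n hx)

-- Up to the factor `exp (-c t)`, the flow of `f + c⁻¹ • g` is that of a map preserving `K`.
lemma linearFlow_mem_of_add_smul_mem {K : PointedCone ℝ E} (hK : IsClosed (K : Set E))
    {f g : E →ₗ[ℝ] E} (hfg : ∀ c : ℝ, 0 < c → ∀ x ∈ K, f x + c⁻¹ • g x + c • x ∈ K)
    {t : ℝ} (ht : 0 ≤ t) {x : E} (hx : x ∈ K) : linearFlow f t x ∈ K := by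
  refine hK.mem_of_tendsto (tendsto_linearFlow_add_inv_smul f g t x) ?_
  filter_upwards [eventually_gt_atTop 0] with c hc
  have h_shift : linearFlow (f + c⁻¹ • g + c • LinearMap.id) t x ∈ K :=
    linearFlow_mem_of_mapsTo hK (fun y hy => hfg c hc y hy) ht hx
  rw [linearFlow_add_smul_id] at h_shift
  exact (K.smul_mem_iff (Real.exp_pos _)).1 h_shift

end LinearFlow

section PositiveSemidefinite

open Filter Topology
open scoped MatrixOrder

variable {ι : Type*}

lemma norm_apply_sq_le_of_posSemidef {X : Matrix ι ι ℂ} (hX : X.PosSemidef) (i j : ι) :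
    ‖X i j‖ ^ 2 ≤ (X i i).re * (X j j).re := by
  have h_det := (hX.submatrix ![i, j]).det_nonneg
  have h_im : (X i i).im = 0 := (Complex.le_def.1 (hX.diag_nonneg (i := i))).2.symm
  simp only [det_fin_two, submatrix_apply, cons_val_zero, cons_val_one, ← hX.1.apply j i] at h_det
  have h_re := (Complex.le_def.1 h_det).1
  simp only [RCLike.star_def, Complex.sub_re, Complex.mul_re, h_im, Complex.mul_conj,
    Complex.zero_re, Complex.ofReal_re, Complex.normSq_eq_norm_sq, zero_mul] at h_re
  linarith

lemma isClosed_setOf_nonneg [Finite ι] : IsClosed {X : Matrix ι ι ℂ | 0 ≤ X} := by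
  have := Fintype.ofFinite ι
  have h_eq : {X : Matrix ι ι ℂ | 0 ≤ X} =
      {X | Xᴴ = X} ∩ ⋂ v : ι → ℂ, {X | 0 ≤ star v ⬝ᵥ X *ᵥ v} := by
    ext X
    simp [nonneg_iff_posSemidef, posSemidef_iff_dotProduct_mulVec, IsHermitian]
  rw [h_eq]
  refine (isClosed_eq continuous_id.matrix_conjTranspose continuous_id).inter <|
    isClosed_iInter fun v => isClosed_le continuous_const ?_
  exact continuous_const.dotProduct (continuous_id.matrix_mulVec continuous_const)

lemma exists_pos_smul_one_le [Finite ι] [DecidableEq ι] {A : Matrix ι ι ℂ} (hA : A.PosDef) :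
    ∃ c : ℝ, 0 < c ∧ c • (1 : Matrix ι ι ℂ) ≤ A := by
  have := Fintype.ofFinite ι
  cases isEmpty_or_nonempty ι
  · exact ⟨1, one_pos, (Subsingleton.elim _ _).le⟩
  · obtain ⟨c, hc, hcA⟩ := (CFC.exists_pos_algebraMap_le_iff hA.isHermitian).2 fun x hx =>
      hA.isStrictlyPositive.spectrum_pos hx
    exact ⟨c, hc, Algebra.algebraMap_eq_smul_one (A := Matrix ι ι ℂ) c ▸ hcA⟩

variable [Fintype ι]

lemma trace_mul_nonneg {A X : Matrix ι ι ℂ} (hA : 0 ≤ A) (hX : 0 ≤ X) : 0 ≤ (A * X).trace := by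
  classical
  obtain ⟨B, rfl⟩ := CStarAlgebra.nonneg_iff_eq_star_mul_self.1 hX
  rw [← mul_assoc, trace_mul_comm, ← mul_assoc]
  exact (hA.posSemidef.mul_mul_conjTranspose_same B).trace_nonneg

lemma trace_mul_le_trace_mul {A B X : Matrix ι ι ℂ} (hAB : A ≤ B) (hX : 0 ≤ X) :
    (A * X).trace ≤ (B * X).trace := by
  rw [← sub_nonneg, ← trace_sub, ← sub_mul]
  exact trace_mul_nonneg (sub_nonneg.2 hAB) hX

lemma posDef_of_mulVec_eq_zero {A : Matrix ι ι ℂ} (hA : 0 ≤ A)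
    (hker : ∀ v, A *ᵥ v = 0 → v = 0) : A.PosDef := by
  classical
  exact hA.posSemidef.posDef_iff_isUnit.2 <| mulVec_injective_iff_isUnit.1 <|
    (injective_iff_map_eq_zero A.mulVecLin).2 hker

lemma vecMulVec_mul_self {ψ : ι → ℂ} (hψ : star ψ ⬝ᵥ ψ = 1) :
    vecMulVec ψ (star ψ) * vecMulVec ψ (star ψ) = vecMulVec ψ (star ψ) := by
  rw [vecMulVec_mul_vecMulVec, hψ, one_smul]

lemma isDensity_vecMulVec {ψ : ι → ℂ} (hψ : star ψ ⬝ᵥ ψ = 1) :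
    IsDensity (vecMulVec ψ (star ψ)) :=
  ⟨posSemidef_vecMulVec_self_star ψ, by rw [trace_vecMulVec, dotProduct_comm, hψ]⟩

lemma smul_one_sub_vecMulVec_le [DecidableEq ι] {A : Matrix ι ι ℂ} {ψ : ι → ℂ} {c : ℝ}
    (hψ : star ψ ⬝ᵥ ψ = 1) (hA : A.IsHermitian) (hAψ : A *ᵥ ψ = ψ)
    (hcA : c • (1 : Matrix ι ι ℂ) ≤ A) :
    c • (1 - vecMulVec ψ (star ψ)) ≤ A - vecMulVec ψ (star ψ) := by
  set P := vecMulVec ψ (star ψ)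
  have hP : Pᴴ = P := (isDensity_vecMulVec hψ).1.1
  have hPP : P * P = P := vecMulVec_mul_self hψ
  have hAP : A * P = P := by rw [mul_vecMulVec, hAψ]
  have hPA : P * A = P := by rw [← hP, ← hA.eq, ← conjTranspose_mul, hAP]
  have h_eq : A - P - c • (1 - P) = (1 - P) * (A - c • 1) * (1 - P)ᴴ := by
    simp only [conjTranspose_sub, conjTranspose_one, hP, mul_sub, sub_mul, one_mul, mul_one,
      hPA, hAP, hPP, smul_mul_assoc, mul_smul_comm, smul_sub]
    abel
  rw [le_iff, h_eq]
  exact (le_iff.1 hcA).mul_mul_conjTranspose_same _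

lemma vecMulVec_le {A : Matrix ι ι ℂ} {ψ : ι → ℂ} (hψ : star ψ ⬝ᵥ ψ = 1) (hA : 0 ≤ A)
    (hAψ : A *ᵥ ψ = ψ) : vecMulVec ψ (star ψ) ≤ A := by
  classical
  simpa using smul_one_sub_vecMulVec_le (c := 0) hψ hA.posSemidef.1 hAψ (by simpa using hA)

lemma sum_norm_apply_sq_of_isHermitian {X : Matrix ι ι ℂ} (hX : X.IsHermitian) :
    ∑ i, ∑ j, ‖X i j‖ ^ 2 = (X * X).trace.re := by
  have h_entry (i j : ι) : ‖X i j‖ ^ 2 = (X i j * X j i).re := by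
    rw [← hX.apply j i, RCLike.star_def, Complex.mul_conj', ← Complex.ofReal_pow,
      Complex.ofReal_re]
  simp [trace, mul_apply, h_entry]

lemma trace_mul_self_re_le {X : Matrix ι ι ℂ} (hX : X.PosSemidef) :
    (X * X).trace.re ≤ X.trace.re ^ 2 :=
  calc (X * X).trace.re = ∑ i, ∑ j, ‖X i j‖ ^ 2 := (sum_norm_apply_sq_of_isHermitian hX.1).symm
    _ ≤ ∑ i, ∑ j, (X i i).re * (X j j).re :=
      Finset.sum_le_sum fun i _ => Finset.sum_le_sum fun j _ =>
        norm_apply_sq_le_of_posSemidef hX i j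
    _ = X.trace.re ^ 2 := by rw [← Finset.sum_mul_sum]; simp [trace, sq]

lemma norm_apply_sub_sq_le {ρ σ : Matrix ι ι ℂ} (hρ : IsDensity ρ) (hσ : IsDensity σ) (i j : ι) :
    ‖σ i j - ρ i j‖ ^ 2 ≤ 2 * (1 - (ρ * σ).trace.re) := by
  have h_expand : ((σ - ρ) * (σ - ρ)).trace.re =
      (σ * σ).trace.re - 2 * (ρ * σ).trace.re + (ρ * ρ).trace.re := by
    simp only [sub_mul, mul_sub, trace_sub, Complex.sub_re, trace_mul_comm σ ρ]
    ring
  have hρ_le := trace_mul_self_re_le hρ.1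
  have hσ_le := trace_mul_self_re_le hσ.1
  rw [hρ.2, Complex.one_re, one_pow] at hρ_le
  rw [hσ.2, Complex.one_re, one_pow] at hσ_le
  calc ‖σ i j - ρ i j‖ ^ 2 ≤ ∑ l, ‖(σ - ρ) i l‖ ^ 2 :=
        Finset.single_le_sum (f := fun l => ‖(σ - ρ) i l‖ ^ 2) (fun _ _ => sq_nonneg _)
          (Finset.mem_univ j)
    _ ≤ ∑ k, ∑ l, ‖(σ - ρ) k l‖ ^ 2 :=
        Finset.single_le_sum (f := fun k => ∑ l, ‖(σ - ρ) k l‖ ^ 2)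
          (fun _ _ => Finset.sum_nonneg fun _ _ => sq_nonneg _) (Finset.mem_univ i)
    _ = ((σ - ρ) * (σ - ρ)).trace.re := sum_norm_apply_sq_of_isHermitian (hσ.1.1.sub hρ.1.1)
    _ ≤ 2 * (1 - (ρ * σ).trace.re) := by linarith

lemma tendsto_of_tendsto_trace_mul {α : Type*} {l : Filter α} {x : α → Matrix ι ι ℂ}
    {ρ : Matrix ι ι ℂ} (hρ : IsDensity ρ) (hx : ∀ᶠ a in l, IsDensity (x a))
    (h_lim : Tendsto (fun a => (ρ * x a).trace.re) l (𝓝 1)) : Tendsto x l (𝓝 ρ) := by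
  refine tendsto_pi_nhds.2 fun i => tendsto_pi_nhds.2 fun j => ?_
  rw [tendsto_iff_norm_sub_tendsto_zero, ← Real.sqrt_zero]
  have h_bound : Tendsto (fun a => 2 * (1 - (ρ * x a).trace.re)) l (𝓝 0) := by
    simpa using (h_lim.const_sub 1).const_mul 2
  have h_sq : Tendsto (fun a => ‖x a i j - ρ i j‖ ^ 2) l (𝓝 0) :=
    squeeze_zero' (.of_forall fun _ => sq_nonneg _)
      (hx.mono fun a ha => norm_apply_sub_sq_le hρ ha i j) h_bound
  simpa using h_sq.sqrt

end PositiveSemidefinite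

section Semigroup

open Filter Topology
open scoped MatrixOrder Matrix.Norms.Elementwise

variable {ι κ : Type*} [Fintype ι] [Fintype κ]

/-- The semigroup `exp (t L)` generated by a superoperator `L`. -/
noncomputable abbrev semigroup (L : Matrix ι ι ℂ →ₗ[ℂ] Matrix ι ι ℂ) (t : ℝ) :
    Matrix ι ι ℂ →L[ℝ] Matrix ι ι ℂ :=
  linearFlow (L.restrictScalars ℝ) t

lemma isGAS_iff {L : Matrix ι ι ℂ →ₗ[ℂ] Matrix ι ι ℂ} {ρ : Matrix ι ι ℂ} :
    IsGAS L ρ ↔ L ρ = 0 ∧ ∀ σ, IsDensity σ → Tendsto (semigroup L · σ) atTop (𝓝 ρ) := by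
  refine and_congr_right fun _ => forall₂_congr fun σ _ => ⟨fun h => ?_, ?_⟩
  · refine tendsto_pi_nhds.2 fun i => tendsto_pi_nhds.2 fun j => h _ ?_ (fun t => ?_) i j
    · exact DFunLike.congr_fun (linearFlow_zero _) σ
    · exact fun i => hasDerivAt_pi.1 (hasDerivAt_pi.1 (hasDerivAt_linearFlow _ σ t) i)
  · rintro h x rfl hx i j
    have h_sol (t : ℝ) : x t = semigroup L t (x 0) := eq_linearFlow_of_hasDerivAt
      (fun s => hasDerivAt_pi.2 fun i => hasDerivAt_pi.2 fun j => hx s i j) t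
    rw [funext h_sol]
    exact tendsto_pi_nhds.1 (tendsto_pi_nhds.1 h i) j

lemma semigroup_apply_of_apply_eq_zero {L : Matrix ι ι ℂ →ₗ[ℂ] Matrix ι ι ℂ} {X : Matrix ι ι ℂ}
    (hX : L X = 0) (t : ℝ) : semigroup L t X = X :=
  linearFlow_apply_of_apply_eq_zero (f := L.restrictScalars ℝ) hX t

lemma eq_of_isGAS {L : Matrix ι ι ℂ →ₗ[ℂ] Matrix ι ι ℂ} {ρ σ : Matrix ι ι ℂ}
    (hL : IsGAS L ρ) (hσ : IsDensity σ) (hLσ : L σ = 0) : σ = ρ := by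
  have h_lim := (isGAS_iff.1 hL).2 σ hσ
  simp only [semigroup_apply_of_apply_eq_zero hLσ] at h_lim
  exact tendsto_nhds_unique tendsto_const_nhds h_lim

/-- The superoperator `X ↦ ∑ₖ Cₖ X Cₖ† + G X + X G†`, the general form of the generator of a
semigroup of completely positive maps. -/
noncomputable def gksl (C : κ → Matrix ι ι ℂ) (G : Matrix ι ι ℂ) :
    Matrix ι ι ℂ →ₗ[ℂ] Matrix ι ι ℂ :=
  ∑ k, LinearMap.mulRight ℂ (C k)ᴴ ∘ₗ LinearMap.mulLeft ℂ (C k) +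
    (LinearMap.mulLeft ℂ G + LinearMap.mulRight ℂ Gᴴ)

lemma gksl_apply (C : κ → Matrix ι ι ℂ) (G X : Matrix ι ι ℂ) :
    gksl C G X = ∑ k, C k * X * (C k)ᴴ + (G * X + X * Gᴴ) := by
  simp [gksl, LinearMap.sum_apply]

/-- The Hilbert–Schmidt adjoint of `gksl C G`, which generates the evolution in the Heisenberg
picture. -/
noncomputable abbrev gkslAdjoint (C : κ → Matrix ι ι ℂ) (G : Matrix ι ι ℂ) :
    Matrix ι ι ℂ →ₗ[ℂ] Matrix ι ι ℂ :=
  gksl (fun k => (C k)ᴴ) Gᴴ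

lemma gkslAdjoint_apply (C : κ → Matrix ι ι ℂ) (G A : Matrix ι ι ℂ) :
    gkslAdjoint C G A = ∑ k, (C k)ᴴ * A * C k + (Gᴴ * A + A * G) := by
  simp only [gksl_apply, conjTranspose_conjTranspose]

lemma trace_gkslAdjoint_mul (C : κ → Matrix ι ι ℂ) (G A X : Matrix ι ι ℂ) :
    (gkslAdjoint C G A * X).trace = (A * gksl C G X).trace := by
  have h_noise (k : κ) : ((C k)ᴴ * A * C k * X).trace = (A * (C k * X * (C k)ᴴ)).trace := by
    rw [mul_assoc, mul_assoc, trace_mul_comm]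
    simp only [mul_assoc]
  have h_drift : (Gᴴ * A * X).trace = (A * (X * Gᴴ)).trace := by
    rw [mul_assoc, trace_mul_comm, mul_assoc]
  rw [gkslAdjoint_apply, gksl_apply]
  simp only [add_mul, mul_add, Finset.sum_mul, Finset.mul_sum, trace_add, trace_sum, h_noise,
    h_drift, mul_assoc A G X]
  ring

lemma trace_semigroup_gkslAdjoint_mul (C : κ → Matrix ι ι ℂ) (G A X : Matrix ι ι ℂ) (t : ℝ) :
    (semigroup (gkslAdjoint C G) t A * X).trace = (A * semigroup (gksl C G) t X).trace :=
  linearFlow_adjoint (f := (gkslAdjoint C G).restrictScalars ℝ)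
    (g := (gksl C G).restrictScalars ℝ)
    ((LinearMap.mul ℝ (Matrix ι ι ℂ)).compr₂ (traceLinearMap ι ℝ ℂ))
    (fun A X => trace_gkslAdjoint_mul C G A X) t A X

lemma semigroup_gksl_nonneg (C : κ → Matrix ι ι ℂ) (G : Matrix ι ι ℂ) {t : ℝ} (ht : 0 ≤ t)
    {X : Matrix ι ι ℂ} (hX : 0 ≤ X) : 0 ≤ semigroup (gksl C G) t X := by
  classical
  let conjG : Matrix ι ι ℂ →ₗ[ℝ] Matrix ι ι ℂ :=
    LinearMap.mulRight ℝ Gᴴ ∘ₗ LinearMap.mulLeft ℝ G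
  refine (PointedCone.mem_positive ℝ (Matrix ι ι ℂ)).1 <|
    linearFlow_mem_of_add_smul_mem (g := conjG) (K := PointedCone.positive ℝ (Matrix ι ι ℂ))
      isClosed_setOf_nonneg (fun c hc Y hY => ?_) ht hX
  have h_square : gksl C G Y + c⁻¹ • (G * Y * Gᴴ) + c • Y =
      ∑ k, C k * Y * (C k)ᴴ + c⁻¹ • ((G + c • 1) * Y * (G + c • 1)ᴴ) := by
    simp only [gksl_apply, conjTranspose_add, conjTranspose_smul, conjTranspose_one, star_trivial,
      add_mul, mul_add, smul_mul_assoc, mul_smul_comm, one_mul, mul_one, smul_add,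
      inv_smul_smul₀ hc.ne']
    abel
  have hY' : Y.PosSemidef := nonneg_iff_posSemidef.1 hY
  change 0 ≤ gksl C G Y + c⁻¹ • (G * Y * Gᴴ) + c • Y
  rw [h_square]
  exact add_nonneg
    (Finset.sum_nonneg fun k _ => (hY'.mul_mul_conjTranspose_same (C k)).nonneg)
    (smul_nonneg (inv_nonneg.2 hc.le) (hY'.mul_mul_conjTranspose_same _).nonneg)

lemma semigroup_gksl_mono (C : κ → Matrix ι ι ℂ) (G : Matrix ι ι ℂ) {t : ℝ} (ht : 0 ≤ t)
    {X Y : Matrix ι ι ℂ} (hXY : X ≤ Y) :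
    semigroup (gksl C G) t X ≤ semigroup (gksl C G) t Y := by
  rw [← sub_nonneg, ← map_sub]
  exact semigroup_gksl_nonneg C G ht (sub_nonneg.2 hXY)

lemma isDensity_semigroup_gksl [DecidableEq ι] {C : κ → Matrix ι ι ℂ} {G : Matrix ι ι ℂ}
    (h_unital : gkslAdjoint C G 1 = 0) {t : ℝ} (ht : 0 ≤ t) {σ : Matrix ι ι ℂ}
    (hσ : IsDensity σ) : IsDensity (semigroup (gksl C G) t σ) := by
  refine ⟨(semigroup_gksl_nonneg C G ht hσ.1.nonneg).posSemidef, ?_⟩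
  have h_trace := trace_semigroup_gkslAdjoint_mul C G 1 σ t
  rwa [semigroup_apply_of_apply_eq_zero h_unital, one_mul, one_mul, hσ.2, eq_comm] at h_trace

end Semigroup

section Stability

open Filter Topology
open scoped MatrixOrder Matrix.Norms.Elementwise

lemma tendsto_atTop_one_of_le_add_one {f : ℝ → ℝ} {c : ℝ} (hc : 0 < c)
    (h_mono : MonotoneOn f (Set.Ici 0)) (h_le : ∀ t, 0 ≤ t → f t ≤ 1)
    (h_step : ∀ t, 0 ≤ t → f t + c * (1 - f t) ≤ f (t + 1)) : Tendsto f atTop (𝓝 1) := by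
  have h_mono' : Monotone fun t => f (max t 0) := fun s t hst =>
    h_mono (le_max_right s 0) (le_max_right t 0) (max_le_max_right 0 hst)
  have h_bdd : BddAbove (Set.range fun t => f (max t 0)) :=
    ⟨1, Set.forall_mem_range.2 fun t => h_le _ (le_max_right t 0)⟩
  obtain ⟨ℓ, hℓ⟩ : ∃ ℓ, Tendsto f atTop (𝓝 ℓ) :=
    ⟨_, (tendsto_atTop_ciSup h_mono' h_bdd).congr' <|
      (eventually_ge_atTop 0).mono fun t ht => by rw [max_eq_left ht]⟩
  have h_upper : ℓ ≤ 1 := le_of_tendsto hℓ <| (eventually_ge_atTop 0).mono h_le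
  have h_lower : ℓ + c * (1 - ℓ) ≤ ℓ :=
    le_of_tendsto_of_tendsto (hℓ.add ((hℓ.const_sub 1).const_mul c))
      (hℓ.comp (tendsto_atTop_add_const_right atTop 1 tendsto_id)) <|
      (eventually_ge_atTop 0).mono h_step
  rwa [show ℓ = 1 by nlinarith] at hℓ

variable {ι κ : Type*} [Fintype ι] [Fintype κ] {C : κ → Matrix ι ι ℂ} {G : Matrix ι ι ℂ}
  {ψ : ι → ℂ}

lemma mulVec_eq_zero_of_gkslAdjoint_mulVec_eq_zero {A : Matrix ι ι ℂ} (hA : 0 ≤ A) {v : ι → ℂ}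
    (hAv : A *ᵥ v = 0) (h_gen : gkslAdjoint C G A *ᵥ v = 0) :
    (∀ k, A *ᵥ (C k *ᵥ v) = 0) ∧ A *ᵥ (G *ᵥ v) = 0 := by
  have h_expand : ∑ k, (C k)ᴴ *ᵥ (A *ᵥ (C k *ᵥ v)) + A *ᵥ (G *ᵥ v) = 0 := by
    simpa only [gkslAdjoint_apply, add_mulVec, sum_mulVec, ← mulVec_mulVec, hAv, mulVec_zero,
      zero_add] using h_gen
  have h_left : star v ᵥ* A = 0 := by
    rw [← hA.posSemidef.1.eq, ← star_mulVec, hAv, star_zero]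
  have h_drift : star v ⬝ᵥ A *ᵥ (G *ᵥ v) = 0 := by
    rw [dotProduct_mulVec, h_left, zero_dotProduct]
  have h_noise (k : κ) : star v ⬝ᵥ (C k)ᴴ *ᵥ (A *ᵥ (C k *ᵥ v)) =
      star (C k *ᵥ v) ⬝ᵥ A *ᵥ (C k *ᵥ v) := by
    rw [dotProduct_mulVec, ← star_mulVec]
  have h_form : ∑ k, star (C k *ᵥ v) ⬝ᵥ A *ᵥ (C k *ᵥ v) = 0 := by
    simpa only [dotProduct_add, dotProduct_sum, h_drift, h_noise, add_zero, dotProduct_zero]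
      using congrArg (star v ⬝ᵥ ·) h_expand
  have hC (k : κ) : A *ᵥ (C k *ᵥ v) = 0 :=
    (hA.posSemidef.dotProduct_mulVec_zero_iff _).1 <|
      (Finset.sum_eq_zero_iff_of_nonneg fun k _ => hA.posSemidef.dotProduct_mulVec_nonneg _).1
        h_form k (Finset.mem_univ k)
  exact ⟨hC, by simpa only [hC, mulVec_zero, Finset.sum_const_zero, zero_add] using h_expand⟩

/-- The projector onto `ψ` evolved for a time `t` in the Heisenberg picture: its expectation in a
state `σ` is the overlap of the evolved state with `ψ`. -/
noncomputable def heisenbergProjector (C : κ → Matrix ι ι ℂ) (G : Matrix ι ι ℂ) (ψ : ι → ℂ)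
    (t : ℝ) : Matrix ι ι ℂ :=
  semigroup (gkslAdjoint C G) t (vecMulVec ψ (star ψ))

lemma heisenbergProjector_nonneg (C : κ → Matrix ι ι ℂ) (G : Matrix ι ι ℂ) (ψ : ι → ℂ) {t : ℝ}
    (ht : 0 ≤ t) : 0 ≤ heisenbergProjector C G ψ t :=
  semigroup_gksl_nonneg _ _ ht (posSemidef_vecMulVec_self_star ψ).nonneg

lemma heisenbergProjector_le_one [DecidableEq ι] (h_unital : gkslAdjoint C G 1 = 0)
    (hψ : star ψ ⬝ᵥ ψ = 1) {t : ℝ} (ht : 0 ≤ t) : heisenbergProjector C G ψ t ≤ 1 := by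
  have h_mono := semigroup_gksl_mono (fun k => (C k)ᴴ) Gᴴ ht
    (vecMulVec_le hψ zero_le_one (one_mulVec ψ))
  rwa [semigroup_apply_of_apply_eq_zero h_unital] at h_mono

lemma heisenbergProjector_mulVec_self [DecidableEq ι] (h_unital : gkslAdjoint C G 1 = 0)
    (hψ : star ψ ⬝ᵥ ψ = 1) (h_inv : gksl C G (vecMulVec ψ (star ψ)) = 0) {t : ℝ} (ht : 0 ≤ t) :
    heisenbergProjector C G ψ t *ᵥ ψ = ψ := by
  set A := heisenbergProjector C G ψ t with hA
  have h_trace : (A * vecMulVec ψ (star ψ)).trace = 1 := by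
    rw [hA, heisenbergProjector, trace_semigroup_gkslAdjoint_mul,
      semigroup_apply_of_apply_eq_zero h_inv, vecMulVec_mul_self hψ, (isDensity_vecMulVec hψ).2]
  have h_form : star ψ ⬝ᵥ (1 - A) *ᵥ ψ = 0 := by
    rw [mul_vecMulVec, trace_vecMulVec, dotProduct_comm] at h_trace
    rw [sub_mulVec, one_mulVec, dotProduct_sub, hψ, h_trace, sub_self]
  have h_psd : (1 - A).PosSemidef := le_iff.1 (heisenbergProjector_le_one h_unital hψ ht)
  have h_ker := (h_psd.dotProduct_mulVec_zero_iff ψ).1 h_form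
  rwa [sub_mulVec, one_mulVec, sub_eq_zero, eq_comm] at h_ker

lemma heisenbergProjector_add (C : κ → Matrix ι ι ℂ) (G : Matrix ι ι ℂ) (ψ : ι → ℂ) (s t : ℝ) :
    heisenbergProjector C G ψ (s + t) =
      semigroup (gkslAdjoint C G) s (heisenbergProjector C G ψ t) :=
  DFunLike.congr_fun (linearFlow_add _ s t) _

lemma trace_heisenbergProjector_mul (C : κ → Matrix ι ι ℂ) (G : Matrix ι ι ℂ) (ψ : ι → ℂ)
    (s t : ℝ) (σ : Matrix ι ι ℂ) :
    (heisenbergProjector C G ψ t * semigroup (gksl C G) s σ).trace =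
      (heisenbergProjector C G ψ (s + t) * σ).trace := by
  rw [heisenbergProjector_add, trace_semigroup_gkslAdjoint_mul]

lemma heisenbergProjector_mono [DecidableEq ι] (h_unital : gkslAdjoint C G 1 = 0)
    (hψ : star ψ ⬝ᵥ ψ = 1) (h_inv : gksl C G (vecMulVec ψ (star ψ)) = 0) :
    MonotoneOn (heisenbergProjector C G ψ) (Set.Ici 0) := by
  intro s hs t _ hst
  have hr : 0 ≤ t - s := sub_nonneg.2 hst
  calc heisenbergProjector C G ψ s
      ≤ semigroup (gkslAdjoint C G) s (heisenbergProjector C G ψ (t - s)) :=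
        semigroup_gksl_mono _ _ hs <| vecMulVec_le hψ (heisenbergProjector_nonneg C G ψ hr) <|
          heisenbergProjector_mulVec_self h_unital hψ h_inv hr
    _ = heisenbergProjector C G ψ t := by rw [← heisenbergProjector_add, add_sub_cancel]

-- A kernel vector of the projector at time `t` stays in the kernel on all of `[0, t]`, so the
-- (left) derivative of the projector at `t` annihilates it too.
lemma gkslAdjoint_heisenbergProjector_mulVec_eq_zero [DecidableEq ι]
    (h_unital : gkslAdjoint C G 1 = 0) (hψ : star ψ ⬝ᵥ ψ = 1)
    (h_inv : gksl C G (vecMulVec ψ (star ψ)) = 0) {t : ℝ} (ht : 0 < t) {v : ι → ℂ}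
    (hv : heisenbergProjector C G ψ t *ᵥ v = 0) :
    gkslAdjoint C G (heisenbergProjector C G ψ t) *ᵥ v = 0 := by
  have h_zero (s : ℝ) (hs : s ∈ Set.Icc 0 t) : heisenbergProjector C G ψ s *ᵥ v = 0 := by
    have h_nonneg := heisenbergProjector_nonneg C G ψ hs.1
    have h_le := le_iff.1 (heisenbergProjector_mono h_unital hψ h_inv hs.1 ht.le hs.2)
    have h_diff := h_le.dotProduct_mulVec_nonneg v
    rw [sub_mulVec, hv, zero_sub, dotProduct_neg, neg_nonneg] at h_diff
    exact (h_nonneg.posSemidef.dotProduct_mulVec_zero_iff v).1 <|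
      h_diff.antisymm (h_nonneg.posSemidef.dotProduct_mulVec_nonneg v)
  let evalv : Matrix ι ι ℂ →L[ℝ] ι → ℂ :=
    LinearMap.toContinuousLinearMap ((mulVecBilin ℝ ℝ).flip v)
  have h_deriv : HasDerivAt (fun s => heisenbergProjector C G ψ s *ᵥ v)
      (gkslAdjoint C G (heisenbergProjector C G ψ t) *ᵥ v) t :=
    evalv.hasFDerivAt.comp_hasDerivAt t
      (hasDerivAt_linearFlow ((gkslAdjoint C G).restrictScalars ℝ) (vecMulVec ψ (star ψ)) t)
  have h_right : t ∈ Set.Icc 0 t := Set.right_mem_Icc.2 ht.le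
  exact (uniqueDiffOn_Icc ht t h_right).eq_deriv _ h_deriv.hasDerivWithinAt <|
    (hasDerivWithinAt_const t _ 0).congr h_zero (h_zero t h_right)

lemma posDef_heisenbergProjector [DecidableEq ι] (h_unital : gkslAdjoint C G 1 = 0)
    (hψ : star ψ ⬝ᵥ ψ = 1) (h_inv : gksl C G (vecMulVec ψ (star ψ)) = 0)
    (h_trivial : ∀ S : Submodule ℂ (ι → ℂ), (∀ v ∈ S, star ψ ⬝ᵥ v = 0) →
      (∀ k, ∀ v ∈ S, C k *ᵥ v ∈ S) → (∀ v ∈ S, G *ᵥ v ∈ S) → S = ⊥) {t : ℝ} (ht : 0 < t) :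
    (heisenbergProjector C G ψ t).PosDef := by
  set A := heisenbergProjector C G ψ t
  have hA : 0 ≤ A := heisenbergProjector_nonneg C G ψ ht.le
  have hAψ : A *ᵥ ψ = ψ := heisenbergProjector_mulVec_self h_unital hψ h_inv ht.le
  have h_stable (v : ι → ℂ) (hv : A *ᵥ v = 0) :
      (∀ k, A *ᵥ (C k *ᵥ v) = 0) ∧ A *ᵥ (G *ᵥ v) = 0 :=
    mulVec_eq_zero_of_gkslAdjoint_mulVec_eq_zero hA hv <|
      gkslAdjoint_heisenbergProjector_mulVec_eq_zero h_unital hψ h_inv ht hv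
  have h_orth (v : ι → ℂ) (hv : A *ᵥ v = 0) : star ψ ⬝ᵥ v = 0 := by
    rw [← hAψ, star_mulVec, hA.posSemidef.1.eq, ← dotProduct_mulVec, hv, dotProduct_zero]
  have h_ker : LinearMap.ker A.mulVecLin = ⊥ :=
    h_trivial _ h_orth (fun k v hv => (h_stable v hv).1 k) fun v hv => (h_stable v hv).2
  exact posDef_of_mulVec_eq_zero hA (LinearMap.ker_eq_bot'.1 h_ker)

lemma tendsto_trace_heisenbergProjector [DecidableEq ι] (h_unital : gkslAdjoint C G 1 = 0)
    (hψ : star ψ ⬝ᵥ ψ = 1) (h_inv : gksl C G (vecMulVec ψ (star ψ)) = 0)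
    (h_pos : (heisenbergProjector C G ψ 1).PosDef) {σ : Matrix ι ι ℂ} (hσ : IsDensity σ) :
    Tendsto (fun t => (heisenbergProjector C G ψ t * σ).trace.re) atTop (𝓝 1) := by
  obtain ⟨c, hc, hcA⟩ := exists_pos_smul_one_le h_pos
  refine tendsto_atTop_one_of_le_add_one hc (fun s hs t ht hst => ?_) (fun t ht => ?_)
    fun t ht => ?_
  · exact (Complex.le_def.1 (trace_mul_le_trace_mul
      (heisenbergProjector_mono h_unital hψ h_inv hs ht hst) hσ.1.nonneg)).1
  · simpa [hσ.2] using (Complex.le_def.1 (trace_mul_le_trace_mul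
      (heisenbergProjector_le_one h_unital hψ ht) hσ.1.nonneg)).1
  · have hσt := isDensity_semigroup_gksl h_unital ht hσ
    have h_gap := smul_one_sub_vecMulVec_le hψ h_pos.isHermitian
      (heisenbergProjector_mulVec_self h_unital hψ h_inv zero_le_one) hcA
    have h_trace := (Complex.le_def.1 (trace_mul_le_trace_mul h_gap hσt.1.nonneg)).1
    have h_zero : (vecMulVec ψ (star ψ) * semigroup (gksl C G) t σ).trace =
        (heisenbergProjector C G ψ t * σ).trace :=
      (trace_semigroup_gkslAdjoint_mul C G _ σ t).symm
    rw [smul_mul_assoc, sub_mul, sub_mul, one_mul, trace_smul, trace_sub, trace_sub, hσt.2,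
      trace_heisenbergProjector_mul, h_zero, Complex.sub_re, Complex.real_smul,
      Complex.re_ofReal_mul, Complex.sub_re, Complex.one_re] at h_trace
    linarith

theorem isGAS_gksl_of_forall_eq_bot [DecidableEq ι] (h_unital : gkslAdjoint C G 1 = 0)
    (hψ : star ψ ⬝ᵥ ψ = 1) (h_inv : gksl C G (vecMulVec ψ (star ψ)) = 0)
    (h_trivial : ∀ S : Submodule ℂ (ι → ℂ), (∀ v ∈ S, star ψ ⬝ᵥ v = 0) →
      (∀ k, ∀ v ∈ S, C k *ᵥ v ∈ S) → (∀ v ∈ S, G *ᵥ v ∈ S) → S = ⊥) :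
    IsGAS (gksl C G) (vecMulVec ψ (star ψ)) := by
  have h_pos := posDef_heisenbergProjector h_unital hψ h_inv h_trivial one_pos
  refine isGAS_iff.2 ⟨h_inv, fun σ hσ => ?_⟩
  refine tendsto_of_tendsto_trace_mul (isDensity_vecMulVec hψ) ?_ <|
    (tendsto_trace_heisenbergProjector h_unital hψ h_inv h_pos hσ).congr fun t => ?_
  · exact (eventually_ge_atTop 0).mono fun t ht => isDensity_semigroup_gksl h_unital ht hσ
  · rw [heisenbergProjector, trace_semigroup_gkslAdjoint_mul]

end Stability

section Lindblad

open Filter Topology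
open scoped MatrixOrder Matrix.Norms.Elementwise

variable {ι κ J : Type*} [Fintype ι] [Fintype κ] [Fintype J] {ψ : ι → ℂ}

lemma vecMulVec_star_mulVec (ψ v : ι → ℂ) : vecMulVec ψ (star ψ) *ᵥ v = (star ψ ⬝ᵥ v) • ψ := by
  rw [vecMulVec_mulVec, op_smul_eq_smul]

lemma exists_eq_smul_of_forall_dotProduct_eq_zero (hψ : star ψ ⬝ᵥ ψ = 1) {w : ι → ℂ}
    (hw : ∀ v, star ψ ⬝ᵥ v = 0 → star w ⬝ᵥ v = 0) : ∃ c : ℂ, w = c • ψ := by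
  set c := star ψ ⬝ᵥ w
  have h_orth : star ψ ⬝ᵥ (w - c • ψ) = 0 := by
    rw [dotProduct_sub, dotProduct_smul, hψ, smul_eq_mul, mul_one, sub_self]
  have h_self : star (w - c • ψ) ⬝ᵥ (w - c • ψ) = 0 := by
    rw [star_sub, star_smul, sub_dotProduct, smul_dotProduct, h_orth, hw _ h_orth, smul_zero,
      sub_zero]
  exact ⟨c, sub_eq_zero.1 (dotProduct_star_self_eq_zero.1 h_self)⟩

lemma exists_mulVec_eq_smul_of_gksl_vecMulVec_eq_zero (hψ : star ψ ⬝ᵥ ψ = 1)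
    {C : κ → Matrix ι ι ℂ} {G : Matrix ι ι ℂ} (h_inv : gksl C G (vecMulVec ψ (star ψ)) = 0) :
    (∀ k, ∃ l : ℂ, C k *ᵥ ψ = l • ψ) ∧ ∃ g : ℂ, G *ᵥ ψ = g • ψ := by
  have h_kernel {v : ι → ℂ} (hv : star ψ ⬝ᵥ v = 0) :
      (∀ k, vecMulVec ψ (star ψ) *ᵥ ((C k)ᴴ *ᵥ v) = 0) ∧
        vecMulVec ψ (star ψ) *ᵥ (Gᴴ *ᵥ v) = 0 := by
    refine mulVec_eq_zero_of_gkslAdjoint_mulVec_eq_zero (isDensity_vecMulVec hψ).1.nonneg ?_ ?_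
    · rw [vecMulVec_star_mulVec, hv, zero_smul]
    · simp only [gkslAdjoint, conjTranspose_conjTranspose, h_inv, zero_mulVec]
  have h_orth {A : Matrix ι ι ℂ} {v : ι → ℂ} (hAv : vecMulVec ψ (star ψ) *ᵥ (Aᴴ *ᵥ v) = 0) :
      star (A *ᵥ ψ) ⬝ᵥ v = 0 := by
    have hψ0 : ψ ≠ 0 := by
      rintro rfl
      simp at hψ
    rw [vecMulVec_star_mulVec, smul_eq_zero_iff_left hψ0] at hAv
    rw [star_mulVec, ← dotProduct_mulVec, hAv]
  exact ⟨fun k => exists_eq_smul_of_forall_dotProduct_eq_zero hψ fun _ hv =>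
      h_orth ((h_kernel hv).1 k),
    exists_eq_smul_of_forall_dotProduct_eq_zero hψ fun _ hv => h_orth (h_kernel hv).2⟩

lemma eq_bot_of_isGAS {L : Matrix ι ι ℂ →ₗ[ℂ] Matrix ι ι ℂ} (hψ : star ψ ⬝ᵥ ψ = 1)
    (hL : IsGAS L (vecMulVec ψ (star ψ))) {S : Submodule ℂ (ι → ℂ)}
    (hS : ∀ v ∈ S, star ψ ⬝ᵥ v = 0)
    (hLS : ∀ X : Matrix ι ι ℂ, (∀ w, X *ᵥ w ∈ S) → ∀ w, L X *ᵥ w ∈ S) : S = ⊥ := by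
  refine (Submodule.eq_bot_iff S).2 fun v hv => by_contra fun hv0 => ?_
  have h_norm : 0 < star v ⬝ᵥ v := dotProduct_star_self_pos_iff.2 hv0
  let σ := (star v ⬝ᵥ v)⁻¹ • vecMulVec v (star v)
  have hσ : IsDensity σ := by
    refine ⟨(posSemidef_vecMulVec_self_star v).smul (inv_nonneg.2 h_norm.le), ?_⟩
    rw [trace_smul, trace_vecMulVec, dotProduct_comm v, smul_eq_mul, inv_mul_cancel₀ h_norm.ne']
  let W : Submodule ℝ (Matrix ι ι ℂ) :=
    (⨅ w, S.comap ((mulVecBilin ℂ ℂ).flip w)).restrictScalars ℝ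
  have hW {X : Matrix ι ι ℂ} : X ∈ W ↔ ∀ w, X *ᵥ w ∈ S := by
    simp [W, Submodule.mem_iInf]
  have hσW : σ ∈ W := hW.2 fun w => by
    rw [smul_mulVec, vecMulVec_star_mulVec]
    exact S.smul_mem _ (S.smul_mem _ hv)
  have h_mem (t : ℝ) (ht : 0 ≤ t) : semigroup L t σ ∈ W :=
    linearFlow_mem_of_mapsTo (K := PointedCone.ofSubmodule W) W.closed_of_finiteDimensional
      (fun X hX => hW.2 (hLS X (hW.1 hX))) ht hσW
  have h_lim : Tendsto (fun t => star ψ ⬝ᵥ semigroup L t σ *ᵥ ψ) atTop (𝓝 1) := by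
    have h_cont : Continuous fun X : Matrix ι ι ℂ => star ψ ⬝ᵥ X *ᵥ ψ :=
      continuous_const.dotProduct (continuous_id.matrix_mulVec continuous_const)
    have := (h_cont.tendsto _).comp ((isGAS_iff.1 hL).2 σ hσ)
    rwa [vecMulVec_star_mulVec, hψ, one_smul, hψ] at this
  refine zero_ne_one (tendsto_nhds_unique (tendsto_const_nhds.congr' ?_) h_lim)
  exact (eventually_ge_atTop 0).mono fun t ht => (hS _ (hW.1 (h_mem t ht) ψ)).symm

lemma gksl_mulVec_mem {C : κ → Matrix ι ι ℂ} {G : Matrix ι ι ℂ} {S : Submodule ℂ (ι → ℂ)}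
    (hC : ∀ k, ∀ v ∈ S, C k *ᵥ v ∈ S) (hG : ∀ v ∈ S, G *ᵥ v ∈ S) {X : Matrix ι ι ℂ}
    (hX : ∀ w, X *ᵥ w ∈ S) (w : ι → ℂ) : gksl C G X *ᵥ w ∈ S := by
  simp only [gksl_apply, add_mulVec, sum_mulVec, ← mulVec_mulVec]
  exact S.add_mem (S.sum_mem fun k _ => hC k _ (hX _)) (S.add_mem (hG _ (hX _)) (hX _))

lemma sum_gksl {κ : J → Type*} [∀ j, Fintype (κ j)] (C : ∀ j, κ j → Matrix ι ι ℂ)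
    (G : J → Matrix ι ι ℂ) :
    ∑ j, gksl (C j) (G j) = gksl (fun p : Σ j, κ j => C p.1 p.2) (∑ j, G j) := by
  ext1 X
  simp only [LinearMap.sum_apply, gksl_apply, Fintype.sum_sigma, Finset.sum_add_distrib,
    Finset.sum_mul, Finset.mul_sum, conjTranspose_sum]

/-- The non-Hermitian effective Hamiltonian `-iH - ½ ∑ₖ Lₖ†Lₖ`, written as the drift term of the
Lindblad generator in the form `gksl`. -/
noncomputable def drift (H : Matrix ι ι ℂ) (L : κ → Matrix ι ι ℂ) : Matrix ι ι ℂ :=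
  -(Complex.I • H) - (1 / 2 : ℂ) • ∑ k, (L k)ᴴ * L k

lemma conjTranspose_drift {H : Matrix ι ι ℂ} (hH : H.IsHermitian) (L : κ → Matrix ι ι ℂ) :
    (drift H L)ᴴ = Complex.I • H - (1 / 2 : ℂ) • ∑ k, (L k)ᴴ * L k := by
  simp [drift, conjTranspose_sum, hH.eq]

variable [DecidableEq ι]

lemma gkslAdjoint_drift_one {H : Matrix ι ι ℂ} (hH : H.IsHermitian)
    (L : κ → Matrix ι ι ℂ) : gkslAdjoint L (drift H L) 1 = 0 := by
  rw [gkslAdjoint_apply, conjTranspose_drift hH, drift]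
  simp only [mul_one, one_mul]
  module

lemma lindbladMap_eq_gksl {H : Matrix ι ι ℂ} (hH : H.IsHermitian) {m : ℕ}
    (L : Fin m → Matrix ι ι ℂ) : lindbladMap H L = gksl L (drift H L) := by
  ext1 X
  rw [gksl_apply, conjTranspose_drift hH, drift]
  simp only [lindbladMap, LinearMap.add_apply, LinearMap.smul_apply, LinearMap.sub_apply,
    LinearMap.sum_apply, LinearMap.mulLeft_apply, LinearMap.mulRight_apply, LinearMap.comp_apply,
    Finset.sum_sub_distrib, ← Finset.smul_sum, Finset.sum_add_distrib, sub_mul, mul_sub, neg_mul,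
    smul_mul_assoc, mul_smul_comm, Finset.sum_mul, Finset.mul_sum]
  module

lemma exists_mulVec_eq_smul_of_lindbladMap_vecMulVec_eq_zero (hψ : star ψ ⬝ᵥ ψ = 1)
    {H : Matrix ι ι ℂ} (hH : H.IsHermitian) {m : ℕ} {L : Fin m → Matrix ι ι ℂ}
    (h_inv : lindbladMap H L (vecMulVec ψ (star ψ)) = 0) :
    (∀ k, ∃ l : ℂ, L k *ᵥ ψ = l • ψ) ∧ ∃ g : ℂ, drift H L *ᵥ ψ = g • ψ :=
  exists_mulVec_eq_smul_of_gksl_vecMulVec_eq_zero hψ (lindbladMap_eq_gksl hH L ▸ h_inv)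

lemma lindbladMap_zero_vecMulVec {m : ℕ} {D : Fin m → Matrix ι ι ℂ} (hD : ∀ k, D k *ᵥ ψ = 0) :
    lindbladMap 0 D (vecMulVec ψ (star ψ)) = 0 := by
  have h_right (k : Fin m) : D k * vecMulVec ψ (star ψ) = 0 := by
    rw [mul_vecMulVec, hD, zero_vecMulVec]
  have h_left (k : Fin m) : vecMulVec ψ (star ψ) * (D k)ᴴ = 0 := by
    rw [vecMulVec_mul, ← star_mulVec, hD, star_zero, vecMulVec_zero]
  simp [lindbladMap, LinearMap.sum_apply, h_right, h_left]

theorem isGAS_sum_lindbladMap_zero (hψ : star ψ ⬝ᵥ ψ = 1) {m : J → ℕ}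
    {D : ∀ j, Fin (m j) → Matrix ι ι ℂ} (hD : ∀ j k, D j k *ᵥ ψ = 0)
    (h_trivial : ∀ S : Submodule ℂ (ι → ℂ), (∀ v ∈ S, star ψ ⬝ᵥ v = 0) →
      (∀ j k, ∀ v ∈ S, D j k *ᵥ v ∈ S) → S = ⊥) :
    IsGAS (∑ j, lindbladMap 0 (D j)) (vecMulVec ψ (star ψ)) := by
  have h_inv : (∑ j, lindbladMap 0 (D j)) (vecMulVec ψ (star ψ)) = 0 := by
    simp only [LinearMap.sum_apply, lindbladMap_zero_vecMulVec (hD _), Finset.sum_const_zero]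
  simp only [lindbladMap_eq_gksl isHermitian_zero, sum_gksl] at h_inv ⊢
  refine isGAS_gksl_of_forall_eq_bot ?_ hψ h_inv fun S hS hDS _ =>
    h_trivial S hS fun j k => hDS ⟨j, k⟩
  simp only [gkslAdjoint, conjTranspose_sum]
  rw [← sum_gksl fun j k => (D j k)ᴴ, LinearMap.sum_apply]
  exact Finset.sum_eq_zero fun j _ => gkslAdjoint_drift_one isHermitian_zero (D j)

theorem eq_bot_of_isGAS_sum_lindbladMap (hψ : star ψ ⬝ᵥ ψ = 1) {m : J → ℕ}
    {H : J → Matrix ι ι ℂ} (hH : ∀ j, (H j).IsHermitian) {L : ∀ j, Fin (m j) → Matrix ι ι ℂ}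
    (h_gas : IsGAS (∑ j, lindbladMap (H j) (L j)) (vecMulVec ψ (star ψ)))
    {S : Submodule ℂ (ι → ℂ)} (hS : ∀ v ∈ S, star ψ ⬝ᵥ v = 0)
    (hLS : ∀ j k, ∀ v ∈ S, L j k *ᵥ v ∈ S) (hGS : ∀ j, ∀ v ∈ S, drift (H j) (L j) *ᵥ v ∈ S) :
    S = ⊥ := by
  refine eq_bot_of_isGAS hψ h_gas hS fun X hX w => ?_
  simp only [LinearMap.sum_apply, sum_mulVec, lindbladMap_eq_gksl (hH _)]
  exact S.sum_mem fun j _ => gksl_mulVec_mem (hLS j) (hGS j) hX w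

/-- The noise operators `G - g` and `Lₖ - lₖ`. When `ψ` is a common eigenvector of the operators `G`
and `Lₖ` with eigenvalues `g` and `lₖ`, these annihilate `ψ` and have the same invariant subspaces
as `G` and `Lₖ`. -/
def shiftedNoise {m : ℕ} (G : Matrix ι ι ℂ) (L : Fin m → Matrix ι ι ℂ) (g : ℂ) (l : Fin m → ℂ) :
    Fin (m + 1) → Matrix ι ι ℂ :=
  Fin.cons (G - g • 1) fun k => L k - l k • 1

lemma sub_smul_one_mulVec (A : Matrix ι ι ℂ) (c : ℂ) (v : ι → ℂ) :
    (A - c • 1) *ᵥ v = A *ᵥ v - c • v := by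
  rw [sub_mulVec, smul_mulVec, one_mulVec]

lemma shiftedNoise_mulVec_eq_zero {m : ℕ} {G : Matrix ι ι ℂ} {L : Fin m → Matrix ι ι ℂ} {g : ℂ}
    {l : Fin m → ℂ} (hg : G *ᵥ ψ = g • ψ) (hl : ∀ k, L k *ᵥ ψ = l k • ψ) (k : Fin (m + 1)) :
    shiftedNoise G L g l k *ᵥ ψ = 0 := by
  cases k using Fin.cases with
  | zero => rw [shiftedNoise, Fin.cons_zero, sub_smul_one_mulVec, hg, sub_self]
  | succ k => rw [shiftedNoise, Fin.cons_succ, sub_smul_one_mulVec, hl, sub_self]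

lemma mulVec_mem_of_sub_smul_one_mulVec_mem {A : Matrix ι ι ℂ} {c : ℂ} {S : Submodule ℂ (ι → ℂ)}
    {v : ι → ℂ} (hv : v ∈ S) (hAv : (A - c • 1) *ᵥ v ∈ S) : A *ᵥ v ∈ S := by
  rw [sub_smul_one_mulVec] at hAv
  exact (Submodule.sub_mem_iff_left S (S.smul_mem c hv)).1 hAv

theorem isGAS_sum_lindbladMap_shiftedNoise (hψ : star ψ ⬝ᵥ ψ = 1) {m : J → ℕ}
    {H : J → Matrix ι ι ℂ} (hH : ∀ j, (H j).IsHermitian) {L : ∀ j, Fin (m j) → Matrix ι ι ℂ}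
    {g : J → ℂ} {l : ∀ j, Fin (m j) → ℂ} (hg : ∀ j, drift (H j) (L j) *ᵥ ψ = g j • ψ)
    (hl : ∀ j k, L j k *ᵥ ψ = l j k • ψ)
    (h_gas : IsGAS (∑ j, lindbladMap (H j) (L j)) (vecMulVec ψ (star ψ))) :
    IsGAS (∑ j, lindbladMap 0 (shiftedNoise (drift (H j) (L j)) (L j) (g j) (l j)))
      (vecMulVec ψ (star ψ)) :=
  isGAS_sum_lindbladMap_zero hψ (fun j => shiftedNoise_mulVec_eq_zero (hg j) (hl j))
    fun _ hS h_shift => eq_bot_of_isGAS_sum_lindbladMap hψ hH h_gas hS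
      (fun j k v hv => mulVec_mem_of_sub_smul_one_mulVec_mem hv (h_shift j k.succ v hv))
      fun j v hv => mulVec_mem_of_sub_smul_one_mulVec_mem hv (h_shift j 0 v hv)

end Lindblad

section StarAlgHom

variable {ι ι' κ : Type*} [Fintype ι] [Fintype ι'] [Fintype κ] [DecidableEq ι] [DecidableEq ι']

lemma map_drift (φ : Matrix ι ι ℂ →⋆ₐ[ℂ] Matrix ι' ι' ℂ) (H : Matrix ι ι ℂ)
    (L : κ → Matrix ι ι ℂ) : φ (drift H L) = drift (φ H) fun k => φ (L k) := by
  simp only [drift, map_sub, map_neg, map_smul, map_sum, map_mul, ← star_eq_conjTranspose,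
    map_star]

lemma map_shiftedNoise (φ : Matrix ι ι ℂ →⋆ₐ[ℂ] Matrix ι' ι' ℂ) {m : ℕ} (G : Matrix ι ι ℂ)
    (L : Fin m → Matrix ι ι ℂ) (g : ℂ) (l : Fin m → ℂ) (k : Fin (m + 1)) :
    φ (shiftedNoise G L g l k) = shiftedNoise (φ G) (fun k => φ (L k)) g l k := by
  cases k using Fin.cases with
  | zero => simp only [shiftedNoise, Fin.cons_zero, map_sub, map_smul, map_one]
  | succ k => simp only [shiftedNoise, Fin.cons_succ, map_sub, map_smul, map_one]

end StarAlgHom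

section Lift

variable {n : ℕ} (d : Fin n → Type*) [∀ a, DecidableEq (d a)]
  (N : Finset (Fin n))

lemma nbhdLift_apply (A : Matrix (nbhdIdx d N) (nbhdIdx d N) ℂ) (x y : ∀ a, d a) :
    nbhdLift d N A x y = A (splitEquiv d N x).1 (splitEquiv d N y).1 *
      (1 : Matrix (nbhdCoIdx d N) (nbhdCoIdx d N) ℂ) (splitEquiv d N x).2 (splitEquiv d N y).2 :=
  rfl

lemma nbhdLift_one : nbhdLift d N 1 = 1 := by
  rw [nbhdLift, splitLift, kroneckerMap_one_one _ zero_mul mul_zero (one_mul 1),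
    submatrix_one_equiv]

lemma nbhdLift_zero : nbhdLift d N 0 = 0 := by
  ext
  rw [nbhdLift_apply, Matrix.zero_apply, Matrix.zero_apply, zero_mul]

lemma conjTranspose_nbhdLift (A : Matrix (nbhdIdx d N) (nbhdIdx d N) ℂ) :
    (nbhdLift d N A)ᴴ = nbhdLift d N Aᴴ := by
  simp only [nbhdLift, splitLift, conjTranspose_submatrix, conjTranspose_kronecker,
    conjTranspose_one]

lemma isHermitian_nbhdLift {A : Matrix (nbhdIdx d N) (nbhdIdx d N) ℂ} (hA : A.IsHermitian) :
    (nbhdLift d N A).IsHermitian := by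
  rw [IsHermitian, conjTranspose_nbhdLift, hA.eq]

variable [∀ a, Fintype (d a)]

lemma nbhdLift_mul (A B : Matrix (nbhdIdx d N) (nbhdIdx d N) ℂ) :
    nbhdLift d N (A * B) = nbhdLift d N A * nbhdLift d N B := by
  rw [nbhdLift, nbhdLift, nbhdLift, splitLift, splitLift, splitLift, submatrix_mul_equiv,
    ← mul_kronecker_mul, one_mul]

/-- The embedding `A ↦ A ⊗ I` of the operators of a neighborhood into those of the whole system,
as a homomorphism of star algebras. -/
noncomputable def nbhdLiftHom : Matrix (nbhdIdx d N) (nbhdIdx d N) ℂ →⋆ₐ[ℂ]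
    Matrix (∀ a, d a) (∀ a, d a) ℂ where
  toFun := nbhdLift d N
  map_one' := nbhdLift_one d N
  map_mul' := nbhdLift_mul d N
  map_zero' := nbhdLift_zero d N
  map_add' A B := by ext; simp [nbhdLift_apply, add_mul]
  commutes' c := by
    rw [Algebra.algebraMap_eq_smul_one, Algebra.algebraMap_eq_smul_one, ← nbhdLift_one d N]
    ext
    simp only [nbhdLift_apply, Matrix.smul_apply, smul_mul_assoc]
  map_star' A := (conjTranspose_nbhdLift d N A).symm

lemma nbhdLift_shiftedNoise_drift {m : ℕ} (H : Matrix (nbhdIdx d N) (nbhdIdx d N) ℂ)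
    (L : Fin m → Matrix (nbhdIdx d N) (nbhdIdx d N) ℂ) (g : ℂ) (l : Fin m → ℂ) (k : Fin (m + 1)) :
    nbhdLift d N (shiftedNoise (drift H L) L g l k) =
      shiftedNoise (drift (nbhdLift d N H) fun k => nbhdLift d N (L k))
        (fun k => nbhdLift d N (L k)) g l k := by
  refine (map_shiftedNoise (nbhdLiftHom d N) _ L g l k).trans ?_
  rw [map_drift]
  rfl

end Lift

/-! ### Statement 19 -/

theorem stmt19
    {n : ℕ} {d : Fin n → Type*} [∀ a, Fintype (d a)] [∀ a, DecidableEq (d a)]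
    {M : ℕ} (Nb : Fin M → Finset (Fin n))
    (ψ : (∀ a, d a) → ℂ) (hψ : ∑ i, (starRingEnd ℂ) (ψ i) * ψ i = 1) :
    IsDQLS d Nb ψ ↔ IsFFQLS d Nb (Matrix.vecMulVec ψ (star ψ)) := by
  have h_unit : star ψ ⬝ᵥ ψ = 1 := hψ
  constructor
  · rintro ⟨Lj, hLj, h_gas⟩
    choose m D hD hDψ using hLj
    refine ⟨Lj, fun j => ⟨0, isHermitian_zero, m j, D j, ?_⟩, fun σ hσ hLσ j => ?_, h_gas⟩
    · rw [hD, nbhdLift_zero]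
    · rw [eq_of_isGAS h_gas hσ hLσ, hD]
      exact lindbladMap_zero_vecMulVec (hDψ j)
  · rintro ⟨Lj, hLj, h_ff, h_gas⟩
    choose H hH m L hL using hLj
    obtain rfl : Lj = fun j => _ := funext hL
    have hH' (j : Fin M) : (nbhdLift d (Nb j) (H j)).IsHermitian :=
      isHermitian_nbhdLift d (Nb j) (hH j)
    have h_inv := h_ff _ (isDensity_vecMulVec h_unit) h_gas.1
    have h_eigen (j : Fin M) :=
      exists_mulVec_eq_smul_of_lindbladMap_vecMulVec_eq_zero h_unit (hH' j) (h_inv j)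
    choose l hl using fun j => (h_eigen j).1
    choose g hg using fun j => (h_eigen j).2
    refine ⟨_, fun j => ⟨m j + 1, shiftedNoise (drift (H j) (L j)) (L j) (g j) (l j), rfl, ?_⟩, ?_⟩
    · intro k
      rw [nbhdLift_shiftedNoise_drift]
      exact shiftedNoise_mulVec_eq_zero (hg j) (hl j) k
    · simp only [nbhdLift_shiftedNoise_drift]
      exact isGAS_sum_lindbladMap_shiftedNoise h_unit hH' hg hl h_gas

end QDS
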